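/- Let p, q, f, σ₀, ω′, B, l′ ∈ V, a, b, t, m, n ∈ ℝ, and set ω_J := ω′ + a·f + b·σ₀. Assume: f·f = 0, f·σ₀ = 1, σ₀·σ₀ = −2, f·p = f·q = σ₀·p = σ₀·q = 0, ω′·f = ω′·σ₀ = 0, ω_J·p = ω_J·q = 0, ω_J·f ≠ 0, and l′·p = l′·q = l′·f = l′·σ₀ = 0. Define ω̌ := (1/(ω_J·f))·(q − t·p − ((q − t·p)·B)·f) and B̌ := (1/(ω_J·f))·(ω′ − (ω_J·B)·f), and set μ(l) := (n, l′, n − m) ∈ ℝ × V × ℝ, the mirror class of l := l′ + m·f + n·σ₀. Then the central charge Z(μ(l)) := (exp(B̌ + iω̌), μ(l)) is a real number. -/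

import Mathlib

/- STATEMENT 12 (Theorem 6.2): for l = l′ + mf + nσ₀ in Pic(S) with l′
orthogonal to p, q, f, σ₀, the mirror class μ(l) = (n, l′, n − m) has real
central charge Z(μ(l)) = (exp(B̌ + iω̌), μ(l)), where ω̌ and B̌ are the mirror
complexified Kähler data of formulas (84)–(85), t = Re(τ). -/

noncomputable section

variable {V : Type*}

/-- Inclusion of `V` into its complexification `V × V`. -/
def toC [AddCommGroup V] [Module ℝ V] (v : V) : V × V := (v, 0)

/-- Scalar multiplication by a complex number on the complexification. -/
def csmul [AddCommGroup V] [Module ℝ V] (c : ℂ) (z : V × V) : V × V :=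
  (c.re • z.1 - c.im • z.2, c.re • z.2 + c.im • z.1)

/-- The ℂ-bilinear extension of a real bilinear form to the complexification. -/
def Bc [AddCommGroup V] [Module ℝ V] (b : LinearMap.BilinForm ℝ V) (z w : V × V) : ℂ :=
  ⟨b z.1 w.1 - b z.2 w.2, b z.1 w.2 + b z.2 w.1⟩

/-- The Mukai pairing of a complexified triple with a real triple. -/
def mukaiC [AddCommGroup V] [Module ℝ V] (b : LinearMap.BilinForm ℝ V)
    (x : ℂ × (V × V) × ℂ) (y : ℝ × V × ℝ) : ℂ :=
  Bc b x.2.1 (toC y.2.1) - x.1 * ((y.2.2 : ℝ) : ℂ) - ((y.1 : ℝ) : ℂ) * x.2.2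

/-- exp(z) = (1, z, ½ z·z) in the complexified Mukai lattice. -/
def cexp [AddCommGroup V] [Module ℝ V] (b : LinearMap.BilinForm ℝ V)
    (z : V × V) : ℂ × (V × V) × ℂ :=
  (1, z, Bc b z z / 2)

/-!
Since `(exp (B + iω), (n, l, s)) = (B + iω)·l - s - n (B + iω)² / 2`, the imaginary part of the
central charge is `ω·l - n B·ω`. Translating vectors orthogonal to an isotropic `f` by multiples
of `f` does not change their products with one another, so `B·ω` is proportional to
`ω'·(q - t p)`. This vanishes because `ω_J` is orthogonal to `p` and `q`, and so are `f` and `σ₀`,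
hence also `ω'`. In the same way `ω·l` is proportional to `(q - t p)·l = 0`.
-/

section IsotropicTranslation

variable {R M : Type*} [CommRing R] [AddCommGroup M] [Module R M]
  {β : LinearMap.BilinForm R M} {f x y : M}

lemma bilin_smul_sub_smul_left_of_ortho (hfy : β f y = 0) (c d : R) :
    β (c • (x - d • f)) y = c * β x y := by
  simp [hfy]

lemma bilin_smul_sub_smul_of_isotropic (hff : β f f = 0) (hxf : β x f = 0) (hfy : β f y = 0)
    (c d c' d' : R) :
    β (c • (x - d • f)) (c' • (y - d' • f)) = c * c' * β x y := by
  simp [hff, hxf, hfy, mul_assoc, mul_left_comm]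

end IsotropicTranslation

section CentralCharge

variable [AddCommGroup V] [Module ℝ V] {b : LinearMap.BilinForm ℝ V}

/-- The central charge `Z(v) = (exp (B + iω), v)` of a real Mukai vector `v` with respect to the
complexified Kähler class `B + iω`. -/
def centralCharge (b : LinearMap.BilinForm ℝ V) (B ω : V) (v : ℝ × V × ℝ) : ℂ :=
  mukaiC b (cexp b (toC B + csmul Complex.I (toC ω))) v

lemma toC_add_csmul_I_toC (x y : V) : toC x + csmul Complex.I (toC y) = (x, y) := by
  simp [toC, csmul]

lemma Bc_self_im (hb : ∀ x y, b x y = b y x) (x y : V) :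
    (Bc b (x, y) (x, y)).im = 2 * b x y := by
  simp only [Bc, hb y x, two_mul]

lemma centralCharge_im (hb : ∀ x y, b x y = b y x) (B ω l : V) (n s : ℝ) :
    (centralCharge b B ω (n, l, s)).im = b ω l - n * b B ω := by
  have im_pair : (Bc b (B, ω) (toC l)).im = b ω l := by simp [Bc, toC]
  have im_half_sq : (Bc b (B, ω) (B, ω) / 2).im = b B ω := by
    rw [Complex.div_ofNat_im, Bc_self_im hb, mul_div_cancel_left₀ _ two_ne_zero]
  simp [centralCharge, toC_add_csmul_I_toC, mukaiC, cexp, im_pair, im_half_sq,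
    -Complex.div_ofNat_im]

theorem mirror_central_charge_real_general (hb : ∀ x y, b x y = b y x) {p q f ω' l : V}
    (hff : b f f = 0) (hfp : b f p = 0) (hfq : b f q = 0)
    (hω'f : b ω' f = 0) (hω'p : b ω' p = 0) (hω'q : b ω' q = 0)
    (hlf : b l f = 0) (hlp : b l p = 0) (hlq : b l q = 0) (c d c' d' t n s : ℝ) :
    (centralCharge b (c • (ω' - d • f)) (c' • (q - t • p - d' • f)) (n, l, s)).im = 0 := by
  have ortho_period {x : V} (hxp : b x p = 0) (hxq : b x q = 0) : b x (q - t • p) = 0 := by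
    simp [hxp, hxq]
  have ω_ortho_l : b (c' • (q - t • p - d' • f)) l = 0 := by
    rw [bilin_smul_sub_smul_left_of_ortho ((hb f l).trans hlf), hb, ortho_period hlp hlq, mul_zero]
  have B_ortho_ω : b (c • (ω' - d • f)) (c' • (q - t • p - d' • f)) = 0 := by
    rw [bilin_smul_sub_smul_of_isotropic hff hω'f (ortho_period hfp hfq), ortho_period hω'p hω'q,
      mul_zero]
  rw [centralCharge_im hb, ω_ortho_l, B_ortho_ω, mul_zero, sub_zero]

end CentralCharge

theorem mirror_central_charge_real
    [AddCommGroup V] [Module ℝ V]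
    (b : LinearMap.BilinForm ℝ V) (hsymm : ∀ x y : V, b x y = b y x)
    (p q f σ₀ ω' Bf l' : V) (a₀ b₀ t m n : ℝ)
    (ωJ : V) (hωJ : ωJ = ω' + a₀ • f + b₀ • σ₀)
    (hff : b f f = 0) (hfσ : b f σ₀ = 1) (hσσ : b σ₀ σ₀ = -2)
    (hfp : b f p = 0) (hfq : b f q = 0) (hσp : b σ₀ p = 0) (hσq : b σ₀ q = 0)
    (hω'f : b ω' f = 0) (hω'σ : b ω' σ₀ = 0)
    (hωJp : b ωJ p = 0) (hωJq : b ωJ q = 0)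
    (hωJf : b ωJ f ≠ 0)
    (hl'p : b l' p = 0) (hl'q : b l' q = 0) (hl'f : b l' f = 0) (hl'σ : b l' σ₀ = 0)
    (omegaCheck : V)
    (homega : omegaCheck = (1 / b ωJ f) • (q - t • p - (b (q - t • p) Bf) • f))
    (BCheck : V)
    (hBCheck : BCheck = (1 / b ωJ f) • (ω' - (b ωJ Bf) • f))
    (μl : ℝ × V × ℝ) (hμl : μl = (n, l', n - m))
    (Z : ℂ)
    (hZ : Z = mukaiC b (cexp b (toC BCheck + csmul Complex.I (toC omegaCheck))) μl) :
    Z.im = 0 := by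
  subst hωJ homega hBCheck hμl hZ
  exact mirror_central_charge_real_general hsymm hff hfp hfq hω'f
    (by simpa [hfp, hσp] using hωJp) (by simpa [hfq, hσq] using hωJq) hl'f hl'p hl'q ..

end
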